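/- Fix k ≥ 1, π ∈ (0,1], and Δ > 2^{2k+1} log(2) / π², and for each n ≥ k let m = ⌈Δ n⌉. Define the test ψ_σ on m-tuples V of k-flats of F_2^n by ψ_σ(V) = 1 iff σ(V) > ((1 − 2^{−k}) + π 2^{−(k+1)}) m. Then max( P_unif(ψ_σ = 1), P_{planted,π}(ψ_σ = 0) ) → 0 as n → ∞. -/

import Mathlib

open scoped BigOperators Classical
open Filter Topology

abbrev F2n (n : ℕ) := Fin n → ZMod 2

def IsFlat (n k : ℕ) (W : Set (F2n n)) : Prop :=
  ∃ A : AffineSubspace (ZMod 2) (F2n n),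
    (A : Set (F2n n)) = W ∧ W.Nonempty ∧ Module.finrank (ZMod 2) A.direction = n - k

def Flat (n k : ℕ) : Type := {W : Set (F2n n) // IsFlat n k W}

noncomputable instance (n k : ℕ) : Fintype (Flat n k) := by
  unfold Flat; exact Fintype.ofFinite _

noncomputable def q0 (n k : ℕ) : Flat n k → ℝ :=
  fun _ => (Fintype.card (Flat n k) : ℝ)⁻¹

noncomputable def qx (n k : ℕ) (x : F2n n) : Flat n k → ℝ :=
  fun W => if x ∈ W.1 then 0 else (Nat.card {W : Flat n k // x ∉ W.1} : ℝ)⁻¹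

noncomputable def prob {α : Type*} [Fintype α] (p : α → ℝ) (E : Set α) : ℝ :=
  ∑ a, if a ∈ E then p a else 0

noncomputable def expect {α : Type*} [Fintype α] (p : α → ℝ) (f : α → ℝ) : ℝ :=
  ∑ a, p a * f a

noncomputable def Punif (n k m : ℕ) : (Fin m → Flat n k) → ℝ :=
  fun V => ∏ j, q0 n k (V j)

noncomputable def Pplanted (n k m : ℕ) : (Fin m → Flat n k) → ℝ :=
  fun V => ((2:ℝ)^n)⁻¹ * ∑ x : F2n n, ∏ j, qx n k x (V j)

noncomputable def Z (n k m : ℕ) (V : Fin m → Flat n k) : ℕ :=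
  Nat.card {x : F2n n // ∀ j, x ∉ (V j).1}

noncomputable def satCount (n k m : ℕ) (V : Fin m → Flat n k) (x : F2n n) : ℕ :=
  Nat.card {j : Fin m // x ∉ (V j).1}

noncomputable def maxSat (n k m : ℕ) (V : Fin m → Flat n k) : ℕ :=
  Finset.univ.sup (fun x : F2n n => satCount n k m V x)

noncomputable def qxpi (n k : ℕ) (x : F2n n) (π : ℝ) : Flat n k → ℝ :=
  fun W => (1 - π) * q0 n k W + π * qx n k x W

noncomputable def Pplantedpi (n k m : ℕ) (π : ℝ) : (Fin m → Flat n k) → ℝ :=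
  fun V => ((2:ℝ)^n)⁻¹ * ∑ x : F2n n, ∏ j, qxpi n k x π (V j)

noncomputable def DeltaK (k : ℕ) : ℝ :=
  Real.log (1/2) / Real.log (1 - ((2:ℝ)^k)⁻¹)


def notSet (n k : ℕ) (x : F2n n) : Set (Flat n k) := {W | x ∉ W.1}

theorem mem_notSet (n k : ℕ) (x : F2n n) (W : Flat n k) : W ∈ notSet n k x ↔ x ∉ W.1 := Iff.rfl

open MeasureTheory ProbabilityTheory in
theorem hoeff_num (p t : ℝ) (h0 : 0 ≤ p) (h1 : p ≤ 1) :
    (1 - p) + p * Real.exp t ≤ Real.exp (t * p + t ^ 2 / 8) := by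
  let μ : Measure ℝ := ENNReal.ofReal (1 - p) • Measure.dirac 0 + ENNReal.ofReal p • Measure.dirac 1
  have hμ : IsProbabilityMeasure μ := by
    constructor
    simp only [μ, Measure.add_apply, Measure.smul_apply, measure_univ, smul_eq_mul, mul_one]
    rw [← ENNReal.ofReal_add (by linarith) h0]; simp
  have hint : ∀ f : ℝ → ℝ, ∫ x, f x ∂μ = (1 - p) * f 0 + p * f 1 := by
    intro f
    rw [integral_add_measure, integral_smul_measure, integral_smul_measure, integral_dirac,
      integral_dirac, ENNReal.toReal_ofReal h0, ENNReal.toReal_ofReal (by linarith)]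
    · simp
    · exact (integrable_dirac (by simp)).smul_measure (by simp)
    · exact (integrable_dirac (by simp)).smul_measure (by simp)
  have hb : ∀ᵐ x ∂μ, id x ∈ Set.Icc (0:ℝ) 1 := by
    simp only [μ, ae_add_measure_iff]
    constructor
    · apply Measure.ae_smul_measure
      exact (ae_dirac_iff (p := fun x : ℝ => x ∈ Set.Icc (0:ℝ) 1) measurableSet_Icc).2 (by simp)
    · apply Measure.ae_smul_measure
      exact (ae_dirac_iff (p := fun x : ℝ => x ∈ Set.Icc (0:ℝ) 1) measurableSet_Icc).2 (by simp)
  have key := (hasSubgaussianMGF_of_mem_Icc (μ := μ) (X := id) aemeasurable_id hb).mgf_le t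
  simp only [mgf, hint] at key
  have e0 : Real.exp (t * p) * ((1 - p) * Real.exp (t * (id 0 - ((1 - p) * id 0 + p * id 1))) + p * Real.exp (t * (id 1 - ((1 - p) * id 0 + p * id 1)))) = (1 - p) + p * Real.exp t := by
    simp only [id]
    have a1 : Real.exp (t * (0 - ((1 - p) * 0 + p * 1))) = Real.exp (-(t*p)) := by ring_nf
    have a2 : Real.exp (t * (1 - ((1 - p) * 0 + p * 1))) = Real.exp t * Real.exp (-(t*p)) := by
      rw [← Real.exp_add]; ring_nf
    rw [a1, a2]
    have : Real.exp (t*p) * Real.exp (-(t*p)) = 1 := by rw [← Real.exp_add]; simp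
    linear_combination ((1 - p) + p * Real.exp t) * this
  rw [← e0, Real.exp_add]
  apply mul_le_mul_of_nonneg_left _ (Real.exp_pos _).le
  refine key.trans (le_of_eq ?_)
  congr 1
  simp
  ring

theorem chernoff {α : Type*} [Fintype α] (q : α → ℝ) (hq : ∀ a, 0 ≤ q a) (hs : ∑ a, q a = 1)
    (A : Set α) (p : ℝ) (hp : ∑ a, (if a ∈ A then q a else 0) = p) (ε : ℝ) (m : ℕ)
    (E : Set (Fin m → α))
    (hE : ∀ V ∈ E, ε * ((p + ε) * m) ≤ ε * ∑ j, (if V j ∈ A then (1:ℝ) else 0)) :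
    prob (fun V : Fin m → α => ∏ j, q (V j)) E ≤ Real.exp (-(2 * ε ^ 2 * m)) := by
  have h0 : 0 ≤ p := by
    rw [← hp]; exact Finset.sum_nonneg fun a _ => by split_ifs <;> simp [hq]
  have h1 : p ≤ 1 := by
    rw [← hp, ← hs]; exact Finset.sum_le_sum fun a _ => by split_ifs <;> simp [hq]
  have hmgf : ∑ a, q a * Real.exp (4 * ε * (if a ∈ A then (1:ℝ) else 0)) = (1 - p) + p * Real.exp (4 * ε) := by
    have : ∀ a, q a * Real.exp (4 * ε * (if a ∈ A then (1:ℝ) else 0))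
        = q a + (if a ∈ A then q a else 0) * (Real.exp (4 * ε) - 1) := by
      intro a; split_ifs <;> simp; ring
    rw [Finset.sum_congr rfl fun a _ => this a, Finset.sum_add_distrib, ← Finset.sum_mul, hs, hp]
    ring
  have hle : ∑ a, q a * Real.exp (4 * ε * (if a ∈ A then (1:ℝ) else 0)) ≤ Real.exp (4 * ε * p + (4 * ε) ^ 2 / 8) := by
    rw [hmgf]; exact hoeff_num p _ h0 h1
  have hnn : 0 ≤ ∑ a, q a * Real.exp (4 * ε * (if a ∈ A then (1:ℝ) else 0)) :=
    Finset.sum_nonneg fun a _ => mul_nonneg (hq a) (Real.exp_pos _).le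
  calc prob (fun V : Fin m → α => ∏ j, q (V j)) E
      ≤ ∑ V : Fin m → α, Real.exp (-(4 * ε * ((p + ε) * m))) * ∏ j, (q (V j) * Real.exp (4 * ε * (if V j ∈ A then (1:ℝ) else 0))) := by
        apply Finset.sum_le_sum
        intro V _
        rw [Finset.prod_mul_distrib, ← Real.exp_sum, ← Finset.mul_sum]
        have hn : 0 ≤ ∏ j, q (V j) := Finset.prod_nonneg fun j _ => hq _
        split_ifs with h
        · rw [mul_left_comm, ← Real.exp_add]
          apply le_mul_of_one_le_right hn
          apply Real.one_le_exp
          have := hE V h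
          nlinarith
        · positivity
    _ = Real.exp (-(4 * ε * ((p + ε) * m))) * (∑ a, q a * Real.exp (4 * ε * (if a ∈ A then (1:ℝ) else 0))) ^ m := by
        rw [← Finset.mul_sum]
        congr 1
        exact (Fintype.sum_pow (fun a => q a * Real.exp (4 * ε * (if a ∈ A then (1:ℝ) else 0))) m).symm
    _ ≤ Real.exp (-(4 * ε * ((p + ε) * m))) * (Real.exp (4 * ε * p + (4 * ε) ^ 2 / 8)) ^ m := by
        gcongr
    _ = Real.exp (-(2 * ε ^ 2 * m)) := by
        rw [← Real.exp_nat_mul, ← Real.exp_add]; congr 1; ring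

theorem flat_nonempty (n k : ℕ) : Nonempty (Flat n k) := by
  let v : Fin (n - k) → F2n n := fun i => Pi.basisFun (ZMod 2) (Fin n) (Fin.castLE (Nat.sub_le n k) i)
  have hv : LinearIndependent (ZMod 2) v :=
    (Pi.basisFun (ZMod 2) (Fin n)).linearIndependent.comp _ (Fin.castLE_injective _)
  let S := Submodule.span (ZMod 2) (Set.range v)
  refine ⟨⟨(S.toAffineSubspace : Set (F2n n)), S.toAffineSubspace, rfl, ⟨0, S.zero_mem⟩, ?_⟩⟩
  rw [Submodule.toAffineSubspace_direction, finrank_span_eq_card hv, Fintype.card_fin]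

theorem flat_card (n k : ℕ) (W : Flat n k) : Nat.card {x // x ∈ W.1} = 2 ^ (n - k) := by
  obtain ⟨W, A, hA, ⟨p, hp⟩, hd⟩ := W
  subst hA
  have : Nonempty A := ⟨⟨p, hp⟩⟩
  have e : A.direction ≃ A := Equiv.vaddConst (⟨p, hp⟩ : A)
  have h1 : Nat.card A = Nat.card A.direction := (Nat.card_congr e).symm
  change Nat.card A = _
  rw [h1, Module.natCard_eq_pow_finrank (K := ZMod 2), hd]
  simp

theorem flat_shift_isFlat (n k : ℕ) (v : F2n n) (W : Set (F2n n)) (h : IsFlat n k W) :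
    IsFlat n k (Set.preimage (fun z => z - v) W) := by
  obtain ⟨A, hA, ⟨p, hp⟩, hd⟩ := h
  refine ⟨A.map (AffineEquiv.constVAdd (ZMod 2) (F2n n) v).toAffineMap, ?_, ⟨p + v, by simpa using hp⟩, ?_⟩
  · ext z
    subst hA
    simp only [AffineSubspace.coe_map, Set.mem_image, Set.mem_preimage]
    constructor
    · rintro ⟨y, hy, rfl⟩
      simpa using hy
    · intro hz
      exact ⟨_, hz, by simp⟩
  · rw [AffineSubspace.map_direction]
    have hl : ((AffineEquiv.constVAdd (ZMod 2) (F2n n) v).toAffineMap).linear = LinearMap.id := rfl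
    rw [hl, Submodule.map_id]
    exact hd

theorem flat_count_const (n k : ℕ) (x y : F2n n) :
    Nat.card {W : Flat n k // x ∈ W.1} ≤ Nat.card {W : Flat n k // y ∈ W.1} := by
  have : Finite (Flat n k) := Finite.of_fintype _
  let f : {W : Flat n k // x ∈ W.1} → {W : Flat n k // y ∈ W.1} := fun W =>
    ⟨⟨_, flat_shift_isFlat n k (y - x) W.1.1 W.1.2⟩, by simpa using W.2⟩
  apply Nat.card_le_card_of_injective f
  rintro ⟨⟨W, hW⟩, hx⟩ ⟨⟨W₂, hW₂⟩, hxx⟩ h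
  have h2 : W = W₂ := by
    have h3 : Set.preimage (fun z => z - (y - x)) W = Set.preimage (fun z => z - (y - x)) W₂ :=
      congrArg (fun U : {W : Flat n k // y ∈ W.1} => U.1.1) h
    have hs : Function.Surjective (fun z : F2n n => z - (y - x)) := fun z => ⟨z + (y - x), by simp⟩
    exact Set.preimage_injective.2 hs h3
  subst h2; rfl

theorem flat_count (n k : ℕ) (hkn : k ≤ n) (x : F2n n) :
    2 ^ k * Nat.card {W : Flat n k // x ∈ W.1} = Fintype.card (Flat n k) := by
  have hc : ∀ y, Nat.card {W : Flat n k // y ∈ W.1} = Nat.card {W : Flat n k // x ∈ W.1} :=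
    fun y => le_antisymm (flat_count_const ..) (flat_count_const ..)
  have h : ∑ y : F2n n, Nat.card {W : Flat n k // y ∈ W.1} = ∑ W : Flat n k, Nat.card {y // y ∈ W.1} := by
    simp only [Nat.card_eq_fintype_card, Fintype.card_subtype, Finset.card_filter]
    exact Finset.sum_comm
  simp only [hc, flat_card, Finset.sum_const, Finset.card_univ, smul_eq_mul] at h
  rw [Fintype.card_fun, ZMod.card, Fintype.card_fin] at h
  have h2 : 2 ^ n = 2 ^ (n - k) * 2 ^ k := by rw [← pow_add]; congr 1; omega
  rw [h2, mul_assoc, mul_comm (Fintype.card _)] at h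
  exact Nat.eq_of_mul_eq_mul_left (by positivity) h

theorem flat_count_compl (n k : ℕ) (hkn : k ≤ n) (x : F2n n) :
    (Nat.card {W : Flat n k // x ∉ W.1} : ℝ) = (1 - ((2:ℝ)^k)⁻¹) * Fintype.card (Flat n k) := by
  have h := flat_count n k hkn x
  have h2 : Nat.card {W : Flat n k // x ∈ W.1} + Nat.card {W : Flat n k // x ∉ W.1} = Fintype.card (Flat n k) := by
    rw [Nat.card_eq_fintype_card, Nat.card_eq_fintype_card, Fintype.card_subtype, Fintype.card_subtype]
    exact Finset.card_filter_add_card_filter_not _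
  have hh1 : (2:ℝ) ^ k * Nat.card {W : Flat n k // x ∈ W.1} = Fintype.card (Flat n k) := by exact_mod_cast h
  have hh2 : (Nat.card {W : Flat n k // x ∈ W.1} : ℝ) + Nat.card {W : Flat n k // x ∉ W.1} = Fintype.card (Flat n k) := by
    exact_mod_cast h2
  have hp : (2:ℝ)^k ≠ 0 := by positivity
  field_simp
  linear_combination (2:ℝ)^k * hh2 - hh1

theorem q0_sum (n k : ℕ) : ∑ W, q0 n k W = 1 := by
  have := flat_nonempty n k
  simp [q0]

theorem sum_const_notMem (n k : ℕ) (x : F2n n) (c : ℝ) :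
    ∑ W : Flat n k, (if W ∈ notSet n k x then c else 0) = Nat.card {W : Flat n k // x ∉ W.1} * c := by
  rw [← Finset.sum_filter, Finset.sum_const, nsmul_eq_mul, Nat.card_eq_fintype_card, Fintype.card_subtype]
  simp only [mem_notSet]

theorem q0_mass (n k : ℕ) (hkn : k ≤ n) (x : F2n n) :
    ∑ W, (if W ∈ notSet n k x then q0 n k W else 0) = 1 - ((2:ℝ)^k)⁻¹ := by
  have := flat_nonempty n k
  have hN : (Fintype.card (Flat n k) : ℝ) ≠ 0 := by exact_mod_cast Fintype.card_ne_zero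
  simp only [q0]
  rw [sum_const_notMem, flat_count_compl n k hkn, mul_assoc, mul_inv_cancel₀ hN, mul_one]

theorem qx_mass (n k : ℕ) (hk : 1 ≤ k) (hkn : k ≤ n) (x : F2n n) :
    ∑ W, (if W ∈ notSet n k x then qx n k x W else 0) = 1 := by
  have := flat_nonempty n k
  have hN : (Fintype.card (Flat n k) : ℝ) ≠ 0 := by exact_mod_cast Fintype.card_ne_zero
  have h2 : (1 - ((2:ℝ)^k)⁻¹) ≠ 0 := by
    have : ((2:ℝ)^k)⁻¹ < 1 := inv_lt_one_of_one_lt₀ (one_lt_pow₀ (by norm_num) (by omega))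
    linarith
  have hC : (Nat.card {W : Flat n k // x ∉ W.1} : ℝ) ≠ 0 := by
    rw [flat_count_compl n k hkn]; exact mul_ne_zero h2 hN
  rw [← mul_inv_cancel₀ hC, ← sum_const_notMem]
  apply Finset.sum_congr rfl
  intro W _
  by_cases h : x ∈ W.1 <;> simp [qx, h, mem_notSet]

theorem qx_sum (n k : ℕ) (hk : 1 ≤ k) (hkn : k ≤ n) (x : F2n n) :
    ∑ W, qx n k x W = 1 := by
  rw [← qx_mass n k hk hkn x]
  apply Finset.sum_congr rfl
  intro W _
  by_cases h : x ∈ W.1 <;> simp [qx, h, mem_notSet]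

theorem satCount_eq (n k m : ℕ) (V : Fin m → Flat n k) (x : F2n n) :
    (satCount n k m V x : ℝ) = ∑ j, (if V j ∈ notSet n k x then (1:ℝ) else 0) := by
  rw [satCount, Nat.card_eq_fintype_card, Fintype.card_subtype, Finset.card_filter]
  push_cast
  simp only [mem_notSet]

theorem eps_eq (k : ℕ) : ((2:ℝ)^(k+1))⁻¹ = ((2:ℝ)^k)⁻¹ / 2 := by
  rw [pow_succ, mul_inv]; ring

theorem unif_bound (n k m : ℕ) (hkn : k ≤ n) (π : ℝ) (hπ0 : 0 < π) :
    prob (Punif n k m) {V | ((1 - ((2:ℝ)^k)⁻¹) + π * ((2:ℝ)^(k+1))⁻¹) * (m : ℝ) < (maxSat n k m V : ℝ)}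
      ≤ (2:ℝ)^n * Real.exp (-(2 * (π * ((2:ℝ)^(k+1))⁻¹) ^ 2 * m)) := by
  set ε := π * ((2:ℝ)^(k+1))⁻¹ with hε
  have hε0 : 0 < ε := by positivity
  let E : F2n n → Set (Fin m → Flat n k) := fun x =>
    {V | ((1 - ((2:ℝ)^k)⁻¹) + ε) * (m : ℝ) < (satCount n k m V x : ℝ)}
  have hb : ∀ x, prob (Punif n k m) (E x) ≤ Real.exp (-(2 * ε ^ 2 * m)) := by
    intro x
    apply chernoff (q0 n k) (fun W => by simp [q0]) (q0_sum n k) _ _ (q0_mass n k hkn x)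
    intro V hV
    rw [← satCount_eq]
    exact mul_le_mul_of_nonneg_left (le_of_lt hV) hε0.le
  have hn : ∀ V, 0 ≤ Punif n k m V := fun V => Finset.prod_nonneg fun j _ => by simp [q0]
  calc _ ≤ ∑ x, prob (Punif n k m) (E x) := by
        unfold prob
        rw [Finset.sum_comm]
        apply Finset.sum_le_sum
        intro V _
        have hnn : ∀ x ∈ Finset.univ, 0 ≤ (if V ∈ E x then Punif n k m V else 0) := by
          intro x _; split_ifs <;> simp [hn]
        split_ifs with h
        · obtain ⟨x, -, hx⟩ := Finset.exists_mem_eq_sup Finset.univ Finset.univ_nonempty (fun x : F2n n => satCount n k m V x)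
          have hxx : V ∈ E x := by
            simp only [Set.mem_ofPred_eq, maxSat, hx] at h
            exact h
          have := Finset.single_le_sum hnn (Finset.mem_univ x)
          rwa [if_pos hxx] at this
        · exact Finset.sum_nonneg hnn
    _ ≤ ∑ x : F2n n, Real.exp (-(2 * ε ^ 2 * m)) := Finset.sum_le_sum fun x _ => hb x
    _ = _ := by simp

theorem planted_bound (n k m : ℕ) (hk : 1 ≤ k) (hkn : k ≤ n) (π : ℝ) (hπ0 : 0 < π) (hπ1 : π ≤ 1) :
    prob (Pplantedpi n k m π) {V | ¬ ((1 - ((2:ℝ)^k)⁻¹) + π * ((2:ℝ)^(k+1))⁻¹) * (m : ℝ) < (maxSat n k m V : ℝ)}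
      ≤ Real.exp (-(2 * (π * ((2:ℝ)^(k+1))⁻¹) ^ 2 * m)) := by
  set ε := π * ((2:ℝ)^(k+1))⁻¹ with hε
  have hε0 : 0 < ε := by positivity
  set E := {V : Fin m → Flat n k | ¬ ((1 - ((2:ℝ)^k)⁻¹) + ε) * (m : ℝ) < (maxSat n k m V : ℝ)} with hE
  have hb : ∀ x, prob (fun V : Fin m → Flat n k => ∏ j, qxpi n k x π (V j)) E ≤ Real.exp (-(2 * ε ^ 2 * m)) := by
    intro x
    have hp : ∑ W, (if W ∈ notSet n k x then qxpi n k x π W else 0) = 1 - ((2:ℝ)^k)⁻¹ + 2 * ε := by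
      have : ∀ W, (if W ∈ notSet n k x then qxpi n k x π W else 0)
          = (1 - π) * (if W ∈ notSet n k x then q0 n k W else 0)
            + π * (if W ∈ notSet n k x then qx n k x W else 0) := by
        intro W; split_ifs <;> simp [qxpi]
      rw [Finset.sum_congr rfl fun W _ => this W, Finset.sum_add_distrib, ← Finset.mul_sum,
        ← Finset.mul_sum, q0_mass n k hkn, qx_mass n k hk hkn, hε, eps_eq]
      ring
    have := chernoff (qxpi n k x π) (fun W => ?_) ?_ _ _ hp (-ε) m E ?_
    · simpa using this
    · have : 0 ≤ qx n k x W := by unfold qx; split_ifs <;> simp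
      have h2 : 0 ≤ q0 n k W := by simp [q0]
      have h3 : 0 ≤ 1 - π := by linarith
      unfold qxpi; positivity
    · simp only [qxpi]
      rw [Finset.sum_add_distrib, ← Finset.mul_sum, ← Finset.mul_sum, q0_sum, qx_sum n k hk hkn]
      ring
    · intro V hV
      rw [← satCount_eq]
      have h1 : (maxSat n k m V : ℝ) ≤ ((1 - ((2:ℝ)^k)⁻¹) + ε) * (m : ℝ) := not_lt.1 hV
      have h2 : (satCount n k m V x : ℝ) ≤ maxSat n k m V := by
        exact_mod_cast Finset.le_sup (f := fun x : F2n n => satCount n k m V x) (Finset.mem_univ x)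
      have h3 := mul_le_mul_of_nonneg_left (h2.trans h1) hε0.le
      linarith
  have heq : prob (Pplantedpi n k m π) E
      = ((2:ℝ)^n)⁻¹ * ∑ x, prob (fun V : Fin m → Flat n k => ∏ j, qxpi n k x π (V j)) E := by
    unfold prob Pplantedpi
    rw [Finset.sum_comm, Finset.mul_sum]
    apply Finset.sum_congr rfl
    intro V _
    split_ifs <;> simp
  rw [heq]
  calc _ ≤ ((2:ℝ)^n)⁻¹ * ∑ x : F2n n, Real.exp (-(2 * ε ^ 2 * m)) := by
        gcongr with x _
        exact hb x
    _ = _ := by simp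

theorem prob_nonneg_aux {α : Type*} [Fintype α] (p : α → ℝ) (E : Set α) (h : ∀ a, 0 ≤ p a) : 0 ≤ prob p E :=
  Finset.sum_nonneg fun a _ => by split_ifs <;> simp [h]

theorem stmt17 (k : ℕ) (hk : 1 ≤ k) (π : ℝ) (hπ0 : 0 < π) (hπ1 : π ≤ 1)
    (Δ : ℝ) (hΔ : (2:ℝ)^(2*k+1) * Real.log 2 / π^2 < Δ) :
    Tendsto (fun n : ℕ =>
        max (prob (Punif n k ⌈Δ * (n:ℝ)⌉₊)
              {V | ((1 - ((2:ℝ)^k)⁻¹) + π * ((2:ℝ)^(k+1))⁻¹) * (⌈Δ * (n:ℝ)⌉₊ : ℝ)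
                    < (maxSat n k ⌈Δ * (n:ℝ)⌉₊ V : ℝ)})
            (prob (Pplantedpi n k ⌈Δ * (n:ℝ)⌉₊ π)
              {V | ¬ ((1 - ((2:ℝ)^k)⁻¹) + π * ((2:ℝ)^(k+1))⁻¹) * (⌈Δ * (n:ℝ)⌉₊ : ℝ)
                    < (maxSat n k ⌈Δ * (n:ℝ)⌉₊ V : ℝ)}))
      atTop (nhds 0) := by
  set ε := π * ((2:ℝ)^(k+1))⁻¹ with hε
  have hε0 : 0 < ε := by positivity
  have hgap : Real.log 2 < 2 * ε ^ 2 * Δ := by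
    rw [div_lt_iff₀ (by positivity)] at hΔ
    have hp : (0:ℝ) < 2 ^ (2*k+1) := by positivity
    have : 2 * ε ^ 2 * Δ = (Δ * π ^ 2) / 2 ^ (2*k+1) := by
      rw [hε]; field_simp; ring
    rw [this, lt_div_iff₀ hp]
    linarith
  have hlim : Tendsto (fun n : ℕ => Real.exp (-((2 * ε ^ 2 * Δ - Real.log 2) * n))) atTop (nhds 0) := by
    apply Real.tendsto_exp_neg_atTop_nhds_zero.comp
    exact tendsto_natCast_atTop_atTop.const_mul_atTop (by linarith)
  apply tendsto_of_tendsto_of_tendsto_of_le_of_le' tendsto_const_nhds hlim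
  · filter_upwards with n
    apply le_max_of_le_left
    exact prob_nonneg_aux _ _ fun V => Finset.prod_nonneg fun j _ => by simp [q0]
  · filter_upwards [eventually_ge_atTop k] with n hn
    have hm : Δ * n ≤ (⌈Δ * (n:ℝ)⌉₊ : ℝ) := Nat.le_ceil _
    have hmain : (2:ℝ)^n * Real.exp (-(2 * ε ^ 2 * (⌈Δ * (n:ℝ)⌉₊ : ℝ)))
        ≤ Real.exp (-((2 * ε ^ 2 * Δ - Real.log 2) * n)) := by
      have h2 : (2:ℝ)^n = Real.exp (n * Real.log 2) := by
        rw [Real.exp_nat_mul, Real.exp_log (by norm_num)]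
      rw [h2, ← Real.exp_add]
      apply Real.exp_le_exp.2
      have := mul_le_mul_of_nonneg_left hm (by positivity : 0 ≤ 2 * ε ^ 2)
      linarith
    apply max_le
    · exact (unif_bound n k _ hn π hπ0).trans hmain
    · refine (planted_bound n k _ hk hn π hπ0 hπ1).trans (le_trans ?_ hmain)
      exact le_mul_of_one_le_left (Real.exp_pos _).le (one_le_pow₀ (by norm_num))
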